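/- Let F and G be free filters on ℕ such that G is not the Fréchet filter F_r and F is not relatively equivalent to the Fréchet filter. If there is a function f : ℕ → ℕ (not necessarily surjective) with f[G] = F, then there is a surjective function g : ℕ → ℕ with g[G] = F. -/

import Mathlib

open Set

/-- `f[G] = {A : f⁻¹(A) ∈ G}`, the image (Rudin–Keisler) filter of a family of sets. -/
def mapFilter {α β : Type*} (f : α → β) (G : Set (Set α)) : Set (Set β) := {A | f ⁻¹' A ∈ G}

/-- `F` is a (proper) filter of subsets. -/
def IsFilterFam {α : Type*} (F : Set (Set α)) : Prop :=
  Set.univ ∈ F ∧ (∀ A ∈ F, ∀ B : Set α, A ⊆ B → B ∈ F) ∧ (∀ A ∈ F, ∀ B ∈ F, A ∩ B ∈ F)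

/-- A free filter: a proper filter containing all cofinite sets. -/
def IsFreeFilter {α : Type*} (F : Set (Set α)) : Prop :=
  IsFilterFam F ∧ (∀ A : Set α, Aᶜ.Finite → A ∈ F) ∧ ∅ ∉ F

/-- `S → F` : `S` is an infinite set converging to the filter `F`, i.e. `S ⊆* A` for all `A ∈ F`. -/
def ConvTo {α : Type*} (S : Set α) (F : Set (Set α)) : Prop :=
  S.Infinite ∧ ∀ A ∈ F, (S \ A).Finite

/-- `F` is relatively equivalent to the Fréchet filter: some `A ∈ F` converges to `F`. -/
def RelFrechet {α : Type*} (F : Set (Set α)) : Prop := ∃ A ∈ F, ConvTo A F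

/-- Rudin–Keisler order: `F ≤_RK G` iff `f[G] = F` for some surjection `f`. -/
def RKle {α : Type*} (F G : Set (Set α)) : Prop :=
  ∃ f : α → α, Function.Surjective f ∧ mapFilter f G = F

/-- `F ≈ G` : there is a bijection `f` with `f[F] = G`. -/
def EquivFilter {α : Type*} (F G : Set (Set α)) : Prop :=
  ∃ f : α → α, Function.Bijective f ∧ mapFilter f F = G

/-- `F <_RK G` : `F ≤_RK G` and `¬ (F ≈ G)`. -/
def RKlt {α : Type*} (F G : Set (Set α)) : Prop := RKle F G ∧ ¬ EquivFilter F G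

/-- An AD-family: an infinite family of infinite sets with pairwise finite intersections. -/
def IsADFamily {α : Type*} (𝒜 : Set (Set α)) : Prop :=
  𝒜.Infinite ∧ (∀ A ∈ 𝒜, A.Infinite) ∧ ∀ A ∈ 𝒜, ∀ B ∈ 𝒜, A ≠ B → (A ∩ B).Finite

/-- The ideal generated by a family `𝒜`: sets almost covered by finitely many members of `𝒜`. -/
def idealGen {α : Type*} (𝒜 : Set (Set α)) : Set (Set α) :=
  {X | ∃ 𝒜' : Finset (Set α), ↑𝒜' ⊆ 𝒜 ∧ (X \ ⋃₀ ↑𝒜').Finite}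

/-- `S_𝒜`: the filter dual to the ideal generated by `𝒜`. -/
def SFam {α : Type*} (𝒜 : Set (Set α)) : Set (Set α) := {F | Fᶜ ∈ idealGen 𝒜}

/-- `F_𝒟 = {F : D ⊆* F for every D ∈ 𝒟}`. -/
def FFam {α : Type*} (𝒟 : Set (Set α)) : Set (Set α) := {F | ∀ D ∈ 𝒟, (D \ F).Finite}

/-- A nowhere MAD family: every set outside the generated ideal contains an infinite set
almost disjoint from every member of `𝒜`. -/
def IsNMAD {α : Type*} (𝒜 : Set (Set α)) : Prop :=
  IsADFamily 𝒜 ∧ ∀ X : Set α, X ∉ idealGen 𝒜 →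
    ∃ B ⊆ X, B.Infinite ∧ ∀ A ∈ 𝒜, (B ∩ A).Finite

/-- A partition of `ℕ` into infinitely many infinite sets. -/
def IsInfPartition (𝒬 : Set (Set ℕ)) : Prop :=
  𝒬.Infinite ∧ (∀ P ∈ 𝒬, P.Infinite) ∧ ⋃₀ 𝒬 = Set.univ ∧
    ∀ P ∈ 𝒬, ∀ Q ∈ 𝒬, P ≠ Q → P ∩ Q = ∅

/-- `F` is a Fréchet–Urysohn filter: every `F`-positive set contains a sequence converging to `F`. -/
def IsFUFilter {α : Type*} (F : Set (Set α)) : Prop :=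
  ∀ A : Set α, Aᶜ ∉ F → ∃ S ⊆ A, ConvTo S F

/-- The trace filter `F|_A = {G ∩ A : G ∈ F}`. -/
def traceFam {α : Type*} (F : Set (Set α)) (A : Set α) : Set (Set α) := {S | ∃ G ∈ F, S = G ∩ A}

/-- Todorčević–Uzcátegui order: there are `A ∈ G⁺`, `B ∈ F` and a bijection `f : A → B`
with `f[G|_A] = F|_B`. -/
def TUle {α : Type*} (F G : Set (Set α)) : Prop :=
  ∃ A : Set α, Aᶜ ∉ G ∧ ∃ B ∈ F, ∃ f : α → α, Set.BijOn f A B ∧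
    {Y : Set α | Y ⊆ B ∧ A ∩ f ⁻¹' Y ∈ traceFam G A} = traceFam F B

/-! Since `G` is not the Fréchet filter, some `A ∈ G` has infinite complement. The filter `f[G]`
depends only on `f` restricted to `A`, so `f` may be redefined on `Aᶜ`, and there is room on `Aᶜ` to
make every natural number a value. -/

section

variable {α β : Type*} {G : Set (Set α)} {A : Set α}

theorem IsFilterFam.preimage_mem_of_eqOn {f g : α → β} {B : Set β} (hG : IsFilterFam G)
    (hA : A ∈ G) (hfg : EqOn f g A) (hB : f ⁻¹' B ∈ G) : g ⁻¹' B ∈ G := by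
  obtain ⟨-, mem_of_superset, inter_mem⟩ := hG
  refine mem_of_superset _ (inter_mem A hA _ hB) _ ?_
  rw [hfg.inter_preimage_eq]
  exact inter_subset_right

theorem IsFilterFam.mapFilter_congr {f g : α → β} (hG : IsFilterFam G) (hA : A ∈ G)
    (hfg : EqOn f g A) : mapFilter f G = mapFilter g G :=
  Subset.antisymm (fun _ => hG.preimage_mem_of_eqOn hA hfg)
    fun _ => hG.preimage_mem_of_eqOn hA hfg.symm

theorem IsFreeFilter.exists_mem_infinite_compl (hG : IsFreeFilter G)
    (hne : G ≠ {A : Set α | Aᶜ.Finite}) : ∃ A ∈ G, Aᶜ.Infinite := by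
  by_contra! hfin
  exact hne (Subset.antisymm hfin hG.2.1)

theorem exists_surjective_eqOn_of_embedding_compl (e : β ↪ ↥Aᶜ) (f : α → β) :
    ∃ g : α → β, Function.Surjective g ∧ EqOn g f A := by
  have he : Function.Injective fun b => (e b : α) := Subtype.val_injective.comp e.injective
  refine ⟨Function.extend (fun b => (e b : α)) id f, fun b => ⟨e b, he.extend_apply id f b⟩, ?_⟩
  intro a ha
  refine Function.extend_apply' id f a ?_
  rintro ⟨b, rfl⟩
  exact (e b).2 ha

theorem statement0_general [Countable β] (hG : IsFreeFilter G)
    (hne : G ≠ {A : Set α | Aᶜ.Finite}) (f : α → β) :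
    ∃ g : α → β, Function.Surjective g ∧ mapFilter g G = mapFilter f G := by
  obtain ⟨A, hA, hAinf⟩ := hG.exists_mem_infinite_compl hne
  obtain ⟨i⟩ := nonempty_embedding_nat β
  obtain ⟨g, hg, hgf⟩ :=
    exists_surjective_eqOn_of_embedding_compl (i.trans (hAinf.natEmbedding Aᶜ)) f
  exact ⟨g, hg, hG.1.mapFilter_congr hA hgf⟩

end

/-- If `G ≠ F_r`, `F` is not relatively equivalent to the Fréchet filter and `f[G] = F` for
some (not necessarily surjective) `f`, then `g[G] = F` for some surjection `g`. -/
theorem statement0 (F G : Set (Set ℕ)) (hF : IsFreeFilter F) (hG : IsFreeFilter G)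
    (hGFr : G ≠ {A : Set ℕ | Aᶜ.Finite}) (hFr : ¬ RelFrechet F)
    (h : ∃ f : ℕ → ℕ, mapFilter f G = F) :
    ∃ g : ℕ → ℕ, Function.Surjective g ∧ mapFilter g G = F := by
  obtain ⟨f, rfl⟩ := h
  exact statement0_general hG hGFr f
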